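/- If a ∈ M₃(ℝ) and c ∈ ℝ³ satisfy a = (tr a)·I − aᵀ − E(c) and c = −Γ(a), then a = 0 and c = 0. -/

import Mathlib

open Matrix

/-- The space of 3×3 real matrices. -/
abbrev M3 := Matrix (Fin 3) (Fin 3) ℝ

/-- The Levi–Civita symbol on `Fin 3`. -/
noncomputable def eps (i j k : Fin 3) : ℝ :=
  (((j : ℕ) : ℝ) - ((i : ℕ) : ℝ)) * (((k : ℕ) : ℝ) - ((i : ℕ) : ℝ)) *
    (((k : ℕ) : ℝ) - ((j : ℕ) : ℝ)) / 2

/-- The map `Γ : M₃(ℝ) → ℝ³`, `Γ(a)_l = Σ_{i,k} ε_{ikl} a_{ik}`. -/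
noncomputable def Gam (a : M3) : Fin 3 → ℝ := fun l => ∑ i, ∑ k, eps i k l * a i k

/-- The map `E : ℝ³ → M₃(ℝ)`, `E(c)_{li} = Σ_k ε_{kli} c_k`. -/
noncomputable def Emap (c : Fin 3 → ℝ) : M3 := fun l i => ∑ k, eps k l i * c k

/-!
The first equation reads `a + aᵀ = (tr a) I - E(c)`. Its left side and `I` are symmetric and `E(c)`
is skew, so `E(c) = 0`, and `Γ(E(c)) = 2c` gives `c = 0`. Taking traces, `2 tr a = 3 tr a`, so
`tr a = 0` and `a` is skew. The second equation now says `Γ(a) = 0`, and `E(Γ(a)) = a - aᵀ` shows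
that `a` is also symmetric, hence zero.
-/

section Matrix

variable {n R : Type*}

theorem eq_zero_of_isSymm_of_transpose_eq_neg [AddGroup R] [IsAddTorsionFree R]
    {A : Matrix n n R} (hsymm : A.IsSymm) (hskew : Aᵀ = -A) : A = 0 :=
  ext fun i j => self_eq_neg.mp (congrFun₂ (hsymm.eq.symm.trans hskew) i j)

theorem trace_eq_zero_of_add_transpose_eq_trace_smul_one [Fintype n] [DecidableEq n]
    [Ring R] [NoZeroDivisors R] {A : Matrix n n R} (hn : (Fintype.card n : R) ≠ 2)
    (h : A + Aᵀ = A.trace • (1 : Matrix n n R)) : A.trace = 0 := by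
  have htrace : A.trace * 2 = A.trace * Fintype.card n := by
    simpa [mul_two] using congrArg trace h
  by_contra hA
  exact hn (mul_left_cancel₀ hA htrace).symm

end Matrix

theorem eps_rotate (i j k : Fin 3) : eps i j k = eps j k i := by
  unfold eps
  ring

theorem eps_swap_right (i j k : Fin 3) : eps i j k = -eps i k j := by
  unfold eps
  ring

theorem sum_eps_mul_eps (i j l m : Fin 3) :
    ∑ k, eps i j k * eps l m k =
      (1 : M3) i l * (1 : M3) j m - (1 : M3) i m * (1 : M3) j l := by
  fin_cases i <;> fin_cases j <;> fin_cases l <;> fin_cases m <;>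
    norm_num [eps, Fin.sum_univ_three]

theorem sum_sum_eps_mul_eps (l m : Fin 3) :
    ∑ i, ∑ k, eps l i k * eps m i k = 2 * (1 : M3) l m := by
  have hdiag : ∑ i, (1 : M3) l i * (1 : M3) i m = (1 : M3) l m := by
    rw [← mul_apply, one_mul]
  simp only [sum_eps_mul_eps, Finset.sum_sub_distrib, one_apply_eq, mul_one, hdiag,
    Finset.sum_const, Finset.card_univ, Fintype.card_fin]
  ring

theorem transpose_Emap (c : Fin 3 → ℝ) : (Emap c)ᵀ = -Emap c := by
  ext l i
  calc (Emap c)ᵀ l i = ∑ k, eps k i l * c k := rfl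
    _ = -∑ k, eps k l i * c k := by
        simp only [eps_swap_right _ i l, neg_mul, Finset.sum_neg_distrib]

theorem Gam_Emap (c : Fin 3 → ℝ) : Gam (Emap c) = (2 : ℝ) • c := by
  ext l
  calc Gam (Emap c) l
      = ∑ i, ∑ k, ∑ m, eps l i k * eps m i k * c m := by
        simp only [Gam, Emap, Finset.mul_sum, mul_assoc, eps_rotate l]
    _ = ∑ m, (∑ i, ∑ k, eps l i k * eps m i k) * c m := by
        simp only [Finset.sum_mul]
        rw [Finset.sum_comm_cycle]
    _ = ((2 : ℝ) • c) l := by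
        simp [sum_sum_eps_mul_eps, one_apply]

theorem eq_zero_of_Emap_eq_zero {c : Fin 3 → ℝ} (h : Emap c = 0) : c = 0 := by
  have htwo : (2 : ℝ) • c = 0 := by
    rw [← Gam_Emap, h]
    ext l
    simp [Gam]
  exact (smul_eq_zero.mp htwo).resolve_left two_ne_zero

theorem Emap_Gam (a : M3) : Emap (Gam a) = a - aᵀ := by
  ext l i
  calc Emap (Gam a) l i
      = ∑ k, ∑ p, ∑ q, eps l i k * eps p q k * a p q := by
        simp only [Emap, Gam, Finset.mul_sum, mul_assoc, eps_rotate _ l i]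
    _ = ∑ p, ∑ q, (∑ k, eps l i k * eps p q k) * a p q := by
        simp only [Finset.sum_mul]
        rw [Finset.sum_comm_cycle, Finset.sum_comm_cycle]
    _ = (a - aᵀ) l i := by
        simp [sum_eps_mul_eps, one_apply, sub_mul, Finset.sum_sub_distrib]

theorem isSymm_of_Gam_eq_zero {a : M3} (h : Gam a = 0) : a.IsSymm := by
  have hsub : a - aᵀ = 0 := by
    rw [← Emap_Gam, h]
    ext l i
    simp [Emap]
  exact (sub_eq_zero.mp hsub).symm

theorem leading_order_vanishing (a : M3) (c : Fin 3 → ℝ)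
    (h1 : a = (Matrix.trace a) • (1 : M3) - aᵀ - Emap c)
    (h2 : c = -Gam a) :
    a = 0 ∧ c = 0 := by
  have hEmap : Emap c = a.trace • (1 : M3) - (a + aᵀ) := by
    linear_combination (norm := abel) h1
  have hEmap_symm : (Emap c).IsSymm :=
    hEmap ▸ (isSymm_one.smul a.trace).sub (isSymm_add_transpose_self a)
  have hEmap_zero : Emap c = 0 :=
    eq_zero_of_isSymm_of_transpose_eq_neg hEmap_symm (transpose_Emap c)
  have hc : c = 0 := eq_zero_of_Emap_eq_zero hEmap_zero
  have hsum : a + aᵀ = a.trace • (1 : M3) :=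
    (sub_eq_zero.mp (hEmap.symm.trans hEmap_zero)).symm
  have htrace : a.trace = 0 :=
    trace_eq_zero_of_add_transpose_eq_trace_smul_one (by norm_num) hsum
  have hskew : aᵀ = -a :=
    eq_neg_of_add_eq_zero_right (by rw [hsum, htrace, zero_smul])
  have hsymm : a.IsSymm :=
    isSymm_of_Gam_eq_zero (neg_eq_zero.mp (h2.symm.trans hc))
  exact ⟨eq_zero_of_isSymm_of_transpose_eq_neg hsymm hskew, hc⟩
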